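/- Let ζ = e^{πi/6}, let G_28 = F_4 ⊂ GL_4(C) be generated by the four order-2 reflections s(β_1), ..., s(β_4) with roots β_1 = e_1 − e_2, β_2 = e_2 − e_3, β_3 = √2 e_3, β_4 = −(1/√2)(e_1 + e_2 + e_3 + e_4), and let g = s(β_1)s(β_2)s(β_3)s(β_4) be the Coxeter element. Let E be the ζ^3-eigenspace of g^3, a 2-dimensional subspace, N_E = {s ∈ G_28 : s(E) ⊆ E}, and π_E restriction to E. Then there exists a C-linear isomorphism ψ : E → C^2 such that ψ ∘ π_E(N_E) ∘ ψ^{−1} = G_8, where G_8 ⊂ GL_2(C) is generated by r_4 = [[1, 0], [0, i]] and r_4' = (1/2)·[[1+i, −1+i], [−1+i, 1+i]]. In other words, the 4-reflection subquotient of G_28 = F_4 is isomorphic to G_8. -/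

import Mathlib

open Matrix MvPolynomial

namespace Paper

noncomputable section

/-- The standard Hermitian inner product `(v, w) = Σ v_i conj(w_i)` on `ℂ^N`. -/
def herm {N : ℕ} (v w : Fin N → ℂ) : ℂ := ∑ i, v i * (starRingEnd ℂ) (w i)

/-- The reflection `s(v, λ) : w ↦ w - (1 - λ) ((w,v)/(v,v)) v` with root `v` and
nontrivial eigenvalue `λ`, as a matrix. -/
def reflMat {N : ℕ} (v : Fin N → ℂ) (lam : ℂ) : Matrix (Fin N) (Fin N) ℂ :=
  Matrix.of fun i j =>
    (if i = j then (1 : ℂ) else 0) - (1 - lam) * v i * (starRingEnd ℂ) (v j) / herm v v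

/-- The monomial matrix `ι(θ, σ)` with `e_i ↦ θ_{σ(i)} e_{σ(i)}`. -/
def monomialMatrix {N : ℕ} (θ : Fin N → ℂ) (σ : Equiv.Perm (Fin N)) :
    Matrix (Fin N) (Fin N) ℂ :=
  Matrix.of fun j i => if j = σ i then θ (σ i) else 0

/-- The imprimitive reflection group `G(m, p, N)`: all monomial `N × N` matrices whose
nonzero entries are `m`-th roots of unity and whose product of nonzero entries is an
`(m/p)`-th root of unity. -/
def Gimp (m p N : ℕ) : Set (Matrix (Fin N) (Fin N) ℂ) :=
  {M | ∃ (θ : Fin N → ℂ) (σ : Equiv.Perm (Fin N)),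
    (∀ i, θ i ^ m = 1) ∧ (∏ i, θ i) ^ (m / p) = 1 ∧ M = monomialMatrix θ σ}

/-- The `μ`-eigenspace of (the linear map of) a matrix. -/
def eigSpace {n : ℕ} (M : Matrix (Fin n) (Fin n) ℂ) (μ : ℂ) : Submodule ℂ (Fin n → ℂ) :=
  Module.End.eigenspace M.mulVecLin μ

/-!
Let `A` be the `4 × 2` matrix `eigFrame` whose orthogonal columns span `E`. It satisfies
`Aᴴ A = 2` and `g ^ 3 = i (A Aᴴ - 1)`, and `x ↦ Aᴴ x` is an isometry of `ℝ⁴` with `ℂ²` that carries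
`ℤ⁴` onto `ℤ[i]²`. The reflections of `F₄` preserve the `24` vectors of norm `2` in `ℤ⁴`, so
`π_E(N_E)` consists of unitary matrices preserving the `24` vectors of norm `2` in `ℤ[i]²`.
All such matrices lie in `G₈`, because `G₈` is transitive on these vectors and contains every
such matrix fixing `(1 + i, 0)`. Conversely, both generators of `G₈` lift to explicit words in the
simple reflections of `F₄`.
-/

section MatrixMonoids

variable {R m n : Type*} [CommSemiring R] [Fintype m] [DecidableEq m] [Fintype n] [DecidableEq n]

/-- The monoid of matrices mapping a set `S` of vectors into itself. For the finite spanning sets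
used here this is the setwise stabilizer. -/
def mulVecStabilizer (S : Set (n → R)) : Submonoid (Matrix n n R) where
  carrier := {M | Set.MapsTo M.mulVec S S}
  one_mem' v hv := by rwa [one_mulVec]
  mul_mem' hM hN v hv := by
    rw [← mulVec_mulVec]
    exact hM (hN hv)

lemma mem_mulVecStabilizer_image {S : Set (m → R)} {B : Matrix n m R} {M : Matrix m m R}
    {M' : Matrix n n R} (hM : M ∈ mulVecStabilizer S) (h : B * M = M' * B) :
    M' ∈ mulVecStabilizer (B.mulVec '' S) := by
  rintro _ ⟨v, hv, rfl⟩
  exact ⟨M *ᵥ v, hM hv, by rw [mulVec_mulVec, mulVec_mulVec, h]⟩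

/-- The subquotient `π_E(N_E)` of `G`, where `E` is the range of an injective matrix `A` and
endomorphisms of `E` are written in the coordinates `t ↦ A t`. -/
def subquotient (G : Submonoid (Matrix m m R)) (A : Matrix m n R) :
    Submonoid (Matrix n n R) where
  carrier := {M' | ∃ M ∈ G, M * A = A * M'}
  one_mem' := ⟨1, one_mem G, by rw [Matrix.one_mul, Matrix.mul_one]⟩
  mul_mem' := by
    rintro M' N' ⟨M, hM, hMA⟩ ⟨N, hN, hNA⟩
    exact ⟨M * N, mul_mem hM hN, by
      rw [Matrix.mul_assoc, hNA, ← Matrix.mul_assoc, hMA, Matrix.mul_assoc]⟩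

lemma mem_subquotient_iff {G : Submonoid (Matrix m m R)} {A : Matrix m n R}
    {M' : Matrix n n R} :
    M' ∈ subquotient G A ↔ ∃ M ∈ G,
      (∀ v ∈ LinearMap.range A.mulVecLin, M *ᵥ v ∈ LinearMap.range A.mulVecLin) ∧
        ∀ t, M *ᵥ A.mulVecLin t = A.mulVecLin (M' *ᵥ t) := by
  have intertwines_iff (M : Matrix m m R) :
      M * A = A * M' ↔ ∀ t, M *ᵥ A.mulVecLin t = A.mulVecLin (M' *ᵥ t) := by
    simp only [mulVecLin_apply, mulVec_mulVec, ← mulVec_injective.eq_iff,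
      funext_iff (f := mulVec _)]
  constructor
  · rintro ⟨M, hM, h⟩
    rw [intertwines_iff] at h
    refine ⟨M, hM, ?_, h⟩
    rintro _ ⟨t, rfl⟩
    exact ⟨_, (h t).symm⟩
  · rintro ⟨M, hM, -, h⟩
    exact ⟨M, hM, (intertwines_iff M).mpr h⟩

end MatrixMonoids

section UnitarySubquotient

variable {K m n : Type*} [Field K] [StarRing K] [Fintype m] [DecidableEq m] [Fintype n]
  [DecidableEq n] {A : Matrix m n K} {c : K}

lemma mem_unitaryGroup_of_intertwines (hc : c ≠ 0) (hA : Aᴴ * A = c • 1) {M : Matrix m m K}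
    {M' : Matrix n n K} (hM : M ∈ unitaryGroup m K) (h : M * A = A * M') :
    M' ∈ unitaryGroup n K := by
  rw [mem_unitaryGroup_iff', star_eq_conjTranspose] at hM ⊢
  refine smul_right_injective _ hc ?_
  calc c • (M'ᴴ * M') = M'ᴴ * (Aᴴ * A) * M' := by simp [hA]
    _ = (A * M')ᴴ * (A * M') := by simp only [conjTranspose_mul, Matrix.mul_assoc]
    _ = Aᴴ * (Mᴴ * M) * A := by simp only [← h, conjTranspose_mul, Matrix.mul_assoc]
    _ = c • 1 := by rw [hM, Matrix.mul_one, hA]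

lemma conjTranspose_intertwines {M : Matrix m m K} {M' : Matrix n n K}
    (hM : M ∈ unitaryGroup m K) (hM' : M' ∈ unitaryGroup n K) (h : M * A = A * M') :
    Aᴴ * M = M' * Aᴴ := by
  rw [mem_unitaryGroup_iff', star_eq_conjTranspose] at hM
  rw [mem_unitaryGroup_iff, star_eq_conjTranspose] at hM'
  calc Aᴴ * M = M' * (M'ᴴ * Aᴴ) * M := by rw [← Matrix.mul_assoc, hM', Matrix.one_mul]
    _ = M' * Aᴴ * (Mᴴ * M) := by
      rw [← conjTranspose_mul, ← h, conjTranspose_mul]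
      simp only [Matrix.mul_assoc]
    _ = M' * Aᴴ := by rw [hM, Matrix.mul_one]

lemma subquotient_le_unitaryGroup_inf_mulVecStabilizer {G : Submonoid (Matrix m m K)}
    {S : Set (m → K)} (hc : c ≠ 0) (hA : Aᴴ * A = c • 1)
    (hG : G ≤ unitaryGroup m K ⊓ mulVecStabilizer S) :
    subquotient G A ≤ unitaryGroup n K ⊓ mulVecStabilizer (Aᴴ.mulVec '' S) := by
  rintro M' ⟨M, hM, h⟩
  obtain ⟨hMunit, hMstab⟩ := hG hM
  have hM'unit := mem_unitaryGroup_of_intertwines hc hA hMunit h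
  exact ⟨hM'unit, mem_mulVecStabilizer_image hMstab (conjTranspose_intertwines hMunit hM'unit h)⟩

end UnitarySubquotient

lemma star_mem_closure {M : Type*} [Monoid M] [StarMul M] {S : Set M}
    (hS : ∀ x ∈ S, star x ∈ Submonoid.closure S) {w : M} (hw : w ∈ Submonoid.closure S) :
    star w ∈ Submonoid.closure S := by
  induction hw using Submonoid.closure_induction with
  | mem x hx => exact hS x hx
  | one => exact (star_one M).symm ▸ one_mem _
  | mul x y _ _ hx hy => exact (star_mul x y).symm ▸ mul_mem hy hx

lemma eigSpace_smul_mul_add_smul_one {m n : ℕ} {A : Matrix (Fin m) (Fin n) ℂ}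
    {B : Matrix (Fin n) (Fin m) ℂ} {a b c : ℂ} (ha : a ≠ 0) (hc : c ≠ 0) (hBA : B * A = c • 1) :
    eigSpace (a • (A * B) + b • 1) (a * c + b) = LinearMap.range A.mulVecLin := by
  ext v
  have mem_iff : v ∈ eigSpace (a • (A * B) + b • 1) (a * c + b) ↔ A *ᵥ (B *ᵥ v) = c • v := by
    simp [eigSpace, add_smul, mul_smul, ha]
  rw [mem_iff]
  constructor
  · intro hv
    exact ⟨c⁻¹ • (B *ᵥ v), by rw [map_smul, mulVecLin_apply, hv, inv_smul_smul₀ hc]⟩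
  · rintro ⟨t, rfl⟩
    rw [mulVecLin_apply, mulVec_mulVec t B, hBA, smul_mulVec, one_mulVec, mulVec_smul]

section Reflection

variable {N : ℕ}

lemma herm_eq_dotProduct (v w : Fin N → ℂ) : herm v w = v ⬝ᵥ star w := rfl

lemma reflMat_eq_one_sub (v : Fin N → ℂ) (lam : ℂ) :
    reflMat v lam = 1 - ((1 - lam) / herm v v) • vecMulVec v (star v) := by
  ext i j
  simp only [reflMat, of_apply, Matrix.sub_apply, one_apply, Matrix.smul_apply,
    vecMulVec_apply, Pi.star_apply, RCLike.star_def, smul_eq_mul]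
  ring

lemma reflMat_smul {c : ℂ} (hc : c ≠ 0) (v : Fin N → ℂ) (lam : ℂ) :
    reflMat (c • v) lam = reflMat v lam := by
  have hc' : star c ≠ 0 := star_ne_zero.mpr hc
  simp only [reflMat_eq_one_sub, herm_eq_dotProduct, star_smul, smul_vecMulVec, vecMulVec_smul,
    smul_dotProduct, dotProduct_smul, smul_smul, smul_eq_mul]
  congr 2
  rcases eq_or_ne (v ⬝ᵥ star v) 0 with hv | hv
  · simp [hv]
  · field_simp

lemma reflMat_mulVec (v w : Fin N → ℂ) (lam : ℂ) :
    reflMat v lam *ᵥ w = w - ((1 - lam) * herm w v / herm v v) • v := by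
  rw [reflMat_eq_one_sub, sub_mulVec, one_mulVec, smul_mulVec, vecMulVec_mulVec, op_smul_eq_smul,
    smul_smul, dotProduct_comm, ← herm_eq_dotProduct, div_mul_eq_mul_div]

lemma reflMat_mem_unitaryGroup (v : Fin N → ℂ) {lam : ℂ} (hlam : star lam * lam = 1) :
    reflMat v lam ∈ unitaryGroup (Fin N) ℂ := by
  set h := herm v v with hh
  set P := vecMulVec v (star v) with hP
  set k := (1 - lam) / h with hk
  have star_h : star h = h := by
    rw [hh, herm_eq_dotProduct, ← star_dotProduct_star, star_star]
  have star_P : star P = P := by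
    rw [star_eq_conjTranspose, conjTranspose_vecMulVec, star_star]
  have P_mul_P : P * P = h • P := by
    rw [hP, vecMulVec_mul_vecMulVec, vecMulVec_smul, dotProduct_comm, ← herm_eq_dotProduct]
  have k_relation : k + star k = k * star k * h := by
    rcases eq_or_ne h 0 with h0 | h0
    · simp [hk, h0]
    · rw [hk, star_div₀, star_h, star_sub, star_one]
      field_simp
      linear_combination -hlam
  rw [mem_unitaryGroup_iff, reflMat_eq_one_sub, star_sub, star_one, star_smul, star_P]
  calc (1 - k • P) * (1 - star k • P) = 1 - (k + star k - k * star k * h) • P := by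
        simp only [sub_mul, mul_sub, Matrix.smul_mul, Matrix.mul_smul, P_mul_P, one_mul, mul_one]
        module
    _ = 1 := by rw [k_relation, sub_self, zero_smul, sub_zero]

/-- The vectors of squared length `m` in `ℤ^N`, as complex vectors. -/
def intSphere (N : ℕ) (m : ℤ) : Set (Fin N → ℂ) :=
  {v | ∃ a : Fin N → ℤ, a ⬝ᵥ a = m ∧ v = fun i => (a i : ℂ)}

lemma herm_intCast (a b : Fin N → ℤ) :
    herm (fun i => (a i : ℂ)) (fun i => (b i : ℂ)) = ((a ⬝ᵥ b : ℤ) : ℂ) := by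
  simp [herm, dotProduct]

lemma reflMat_mem_mulVecStabilizer_intSphere (b : Fin N → ℤ) {m : ℤ}
    (h : ∀ a : Fin N → ℤ, a ⬝ᵥ a = m → b ⬝ᵥ b ∣ 2 * (a ⬝ᵥ b)) :
    reflMat (fun i => (b i : ℂ)) (-1) ∈ mulVecStabilizer (intSphere N m) := by
  rintro _ ⟨a, ha, rfl⟩
  set k := 2 * (a ⬝ᵥ b) / (b ⬝ᵥ b)
  have hk : k * (b ⬝ᵥ b) = 2 * (a ⬝ᵥ b) := Int.ediv_mul_cancel (h a ha)
  refine ⟨a - k • b, ?_, ?_⟩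
  · simp only [sub_dotProduct, dotProduct_sub, smul_dotProduct, dotProduct_smul, smul_eq_mul,
      dotProduct_comm b a]
    linear_combination ha + k * hk
  · have k_cast : (k : ℂ) = (1 - -1) * ((a ⬝ᵥ b : ℤ) : ℂ) / ((b ⬝ᵥ b : ℤ) : ℂ) := by
      rw [Int.cast_div_charZero (h a ha)]
      push_cast
      ring
    rw [reflMat_mulVec, herm_intCast, herm_intCast, ← k_cast]
    ext i
    simp

end Reflection

section F4

/-- The integer vectors proportional to the simple roots `β_1, …, β_4` of `F₄`. -/
def f4Root : Fin 4 → Fin 4 → ℤ :=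
  ![![1, -1, 0, 0], ![0, 1, -1, 0], ![0, 0, 1, 0], ![1, 1, 1, 1]]

/-- The simple reflections `s(β_1), …, s(β_4)` of `F₄`. -/
def f4Refl (i : Fin 4) : Matrix (Fin 4) (Fin 4) ℂ :=
  reflMat (fun j => (f4Root i j : ℂ)) (-1)

/-- The reflection group `G₂₈ = F₄`. -/
def f4Group : Submonoid (Matrix (Fin 4) (Fin 4) ℂ) :=
  Submonoid.closure (Set.range f4Refl)

/-- The Coxeter element of `F₄`. -/
def f4Coxeter : Matrix (Fin 4) (Fin 4) ℂ :=
  f4Refl 0 * f4Refl 1 * f4Refl 2 * f4Refl 3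

lemma f4Refl_mem (i : Fin 4) : f4Refl i ∈ f4Group :=
  Submonoid.subset_closure ⟨i, rfl⟩

lemma f4Coxeter_mem : f4Coxeter ∈ f4Group :=
  mul_mem (mul_mem (mul_mem (f4Refl_mem 0) (f4Refl_mem 1)) (f4Refl_mem 2)) (f4Refl_mem 3)

lemma reflMat_eq_f4Refl {β : Fin 4 → Fin 4 → ℂ} (hβ0 : β 0 = ![1, -1, 0, 0])
    (hβ1 : β 1 = ![0, 1, -1, 0]) (hβ2 : β 2 = ![0, 0, (Real.sqrt 2 : ℂ), 0])
    (hβ3 : β 3 = ![-(1 / (Real.sqrt 2 : ℂ)), -(1 / (Real.sqrt 2 : ℂ)),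
      -(1 / (Real.sqrt 2 : ℂ)), -(1 / (Real.sqrt 2 : ℂ))]) (i : Fin 4) :
    reflMat (β i) (-1) = f4Refl i := by
  obtain ⟨c, hc, hβ⟩ : ∃ c : ℂ, c ≠ 0 ∧ β i = c • fun j => (f4Root i j : ℂ) := by
    refine ⟨![1, 1, Real.sqrt 2, -(1 / Real.sqrt 2)] i, ?_, ?_⟩
    · fin_cases i <;> simp
    · ext j
      fin_cases i <;> fin_cases j <;> simp [hβ0, hβ1, hβ2, hβ3, f4Root]
  rw [hβ, reflMat_smul hc, f4Refl]

lemma f4Root_dvd (i : Fin 4) {a : Fin 4 → ℤ} (ha : Even (a ⬝ᵥ a)) :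
    f4Root i ⬝ᵥ f4Root i ∣ 2 * (a ⬝ᵥ f4Root i) := by
  have even_sum : Even (a 0 + a 1 + a 2 + a 3) := by
    simpa [dotProduct, Fin.sum_univ_four, Int.even_add, Int.even_mul] using ha
  fin_cases i
  · exact dvd_mul_right 2 _
  · exact dvd_mul_right 2 _
  · exact one_dvd _
  · obtain ⟨k, hk⟩ := even_sum
    have dotProduct_ones : a ⬝ᵥ f4Root 3 = a 0 + a 1 + a 2 + a 3 := by
      simp [f4Root, dotProduct, Fin.sum_univ_four]
    change 4 ∣ 2 * (a ⬝ᵥ f4Root 3)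
    exact ⟨k, by linarith⟩

lemma f4Group_le_unitaryGroup_inf_mulVecStabilizer {m : ℤ} (hm : Even m) :
    f4Group ≤ unitaryGroup (Fin 4) ℂ ⊓ mulVecStabilizer (intSphere 4 m) := by
  rw [f4Group, Submonoid.closure_le]
  rintro _ ⟨i, rfl⟩
  exact ⟨reflMat_mem_unitaryGroup _ (by simp),
    reflMat_mem_mulVecStabilizer_intSphere _ fun a ha => f4Root_dvd i (ha ▸ hm)⟩

lemma f4Refl_eq : f4Refl = ![
    !![0, 1, 0, 0; 1, 0, 0, 0; 0, 0, 1, 0; 0, 0, 0, 1],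
    !![1, 0, 0, 0; 0, 0, 1, 0; 0, 1, 0, 0; 0, 0, 0, 1],
    !![1, 0, 0, 0; 0, 1, 0, 0; 0, 0, -1, 0; 0, 0, 0, 1],
    (1 / 2 : ℂ) • !![1, -1, -1, -1; -1, 1, -1, -1; -1, -1, 1, -1; -1, -1, -1, 1]] := by
  ext i j k
  fin_cases i <;> fin_cases j <;> fin_cases k <;>
    simp [f4Refl, f4Root, reflMat, herm, Fin.sum_univ_four] <;> norm_num

lemma f4Coxeter_eq : f4Coxeter =
    (1 / 2 : ℂ) • !![1, 1, -1, 1; 1, -1, -1, -1; -1, 1, -1, -1; -1, -1, -1, 1] := by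
  simp [f4Coxeter, f4Refl_eq]

/-- A matrix with orthogonal columns spanning the `i`-eigenspace `E` of `g ^ 3`, where `g` is the
Coxeter element of `F₄`. -/
def eigFrame : Matrix (Fin 4) (Fin 2) ℂ :=
  !![-Complex.I, 0; 0, Complex.I; 0, 1; 1, 0]

lemma conjTranspose_eigFrame : eigFrameᴴ = !![Complex.I, 0, 0, 1; 0, -Complex.I, 1, 0] := by
  ext i j
  fin_cases i <;> fin_cases j <;> simp [eigFrame]

lemma conjTranspose_eigFrame_mul_eigFrame : eigFrameᴴ * eigFrame = (2 : ℂ) • 1 := by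
  rw [conjTranspose_eigFrame, eigFrame]
  ext i j
  fin_cases i <;> fin_cases j <;> simp <;> norm_num

lemma f4Coxeter_pow_three :
    f4Coxeter ^ 3 = Complex.I • (eigFrame * eigFrameᴴ) + (-Complex.I) • 1 := by
  rw [conjTranspose_eigFrame, eigFrame, f4Coxeter_eq]
  ext i j
  fin_cases i <;> fin_cases j <;> simp [pow_succ] <;> norm_num

lemma eigSpace_f4Coxeter_pow_three :
    eigSpace (f4Coxeter ^ 3) Complex.I = LinearMap.range eigFrame.mulVecLin := by
  have h := eigSpace_smul_mul_add_smul_one (b := -Complex.I) Complex.I_ne_zero two_ne_zero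
    conjTranspose_eigFrame_mul_eigFrame
  rwa [← f4Coxeter_pow_three, mul_two, add_neg_cancel_right] at h

lemma eigFrame_mulVecLin_injective : Function.Injective eigFrame.mulVecLin := by
  intro s t hst
  have h := congrArg (eigFrameᴴ *ᵥ ·) hst
  simpa [conjTranspose_eigFrame_mul_eigFrame, smul_mulVec] using h

end F4

section Gaussian

open GaussianInt

/-- The vectors of squared length `m` in `ℤ[i]^N`, as complex vectors. -/
def gaussianSphere (N : ℕ) (m : ℤ) : Set (Fin N → ℂ) :=
  {v | ∃ z : Fin N → GaussianInt, ∑ i, (z i).norm = m ∧ v = fun i => (z i : ℂ)}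

lemma conjTranspose_eigFrame_image_intSphere (m : ℤ) :
    eigFrameᴴ.mulVec '' intSphere 4 m = gaussianSphere 2 m := by
  have mulVec_intCast (a : Fin 4 → ℤ) : eigFrameᴴ *ᵥ (fun i => (a i : ℂ)) =
      fun i => toComplex (![⟨a 3, a 0⟩, ⟨a 2, -a 1⟩] i) := by
    rw [conjTranspose_eigFrame]
    ext i
    fin_cases i <;>
      simp [mulVec, dotProduct, Fin.sum_univ_four, toComplex_def] <;> ring
  ext v
  constructor
  · rintro ⟨_, ⟨a, ha, rfl⟩, rfl⟩
    refine ⟨_, ?_, mulVec_intCast a⟩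
    simp only [dotProduct, Fin.sum_univ_four] at ha
    simp only [Fin.sum_univ_two, Zsqrtd.norm_def, cons_val_zero, cons_val_one, ← ha]
    ring
  · rintro ⟨z, hz, rfl⟩
    refine ⟨_, ⟨![(z 0).im, -(z 1).im, (z 1).re, (z 0).re], ?_, rfl⟩, ?_⟩
    · simp only [dotProduct, Fin.sum_univ_four, cons_val, ← hz, Zsqrtd.norm_def, Fin.sum_univ_two]
      ring
    · rw [mulVec_intCast]
      ext i
      fin_cases i <;> simp

lemma exists_eq_I_pow_of_norm_eq_one {z : GaussianInt} (hz : z.norm = 1) :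
    ∃ k : ℕ, (z : ℂ) = Complex.I ^ k := by
  obtain ⟨x, y⟩ := z
  replace hz : x ^ 2 + y ^ 2 = 1 := by
    rw [Zsqrtd.norm_def] at hz
    linear_combination hz
  have hx : x ^ 2 ≤ 1 := by linarith [sq_nonneg y]
  have hy : y ^ 2 ≤ 1 := by linarith [sq_nonneg x]
  obtain ⟨hx₁, hx₂⟩ := abs_le.mp ((sq_le_one_iff_abs_le_one x).mp hx)
  obtain ⟨hy₁, hy₂⟩ := abs_le.mp ((sq_le_one_iff_abs_le_one y).mp hy)
  interval_cases x <;> interval_cases y <;> simp at hz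
  · exact ⟨2, by simp [toComplex_def]⟩
  · exact ⟨3, by simp [toComplex_def]⟩
  · exact ⟨1, by simp [toComplex_def]⟩
  · exact ⟨0, by simp [toComplex_def]⟩

lemma one_add_I_dvd_of_even_norm {z : GaussianInt} (hz : Even z.norm) :
    (⟨1, 1⟩ : GaussianInt) ∣ z := by
  obtain ⟨t, ht⟩ : Even (z.re + z.im) := by
    simpa [Zsqrtd.norm_def, Int.even_add, Int.even_mul] using hz
  refine ⟨⟨t, z.im - t⟩, Zsqrtd.ext ?_ ?_⟩
  · simp only [Zsqrtd.re_mul]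
    linarith
  · simp

lemma exists_eq_one_add_I_mul_I_pow_of_norm_eq_two {z : GaussianInt} (hz : z.norm = 2) :
    ∃ k : ℕ, (z : ℂ) = (1 + Complex.I) * Complex.I ^ k := by
  obtain ⟨u, rfl⟩ := one_add_I_dvd_of_even_norm (hz ▸ even_two)
  have norm_one_add_I : (⟨1, 1⟩ : GaussianInt).norm = 2 := rfl
  rw [Zsqrtd.norm_mul, norm_one_add_I] at hz
  obtain ⟨k, hk⟩ := exists_eq_I_pow_of_norm_eq_one (z := u) (by linarith)
  exact ⟨k, by rw [toComplex_mul, hk, toComplex_def']; simp⟩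

/-- The base point of the transitive action of `G₈` on the norm `2` vectors of `ℤ[i]²`. -/
def g8BasePoint : Fin 2 → ℂ := ![1 + Complex.I, 0]

lemma g8BasePoint_mem : g8BasePoint ∈ gaussianSphere 2 2 :=
  ⟨![⟨1, 1⟩, 0], rfl, by ext i; fin_cases i <;> simp [g8BasePoint, toComplex_def]⟩

lemma mem_gaussianSphere_two_two {v : Fin 2 → ℂ} (hv : v ∈ gaussianSphere 2 2) :
    (∃ k : ℕ, v = ![(1 + Complex.I) * Complex.I ^ k, 0]) ∨
    (∃ k : ℕ, v = ![0, (1 + Complex.I) * Complex.I ^ k]) ∨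
    ∃ k l : ℕ, v = ![Complex.I ^ k, Complex.I ^ l] := by
  obtain ⟨z, hz, rfl⟩ := hv
  rw [Fin.sum_univ_two] at hz
  have coords : (fun i => (z i : ℂ)) = ![(z 0 : ℂ), (z 1 : ℂ)] := by
    ext i
    fin_cases i <;> rfl
  rw [coords]
  have hnonneg (w : GaussianInt) : 0 ≤ w.norm := GaussianInt.norm_nonneg w
  obtain ⟨h0, h1⟩ | ⟨h0, h1⟩ | ⟨h0, h1⟩ : ((z 0).norm = 2 ∧ (z 1).norm = 0) ∨
      ((z 0).norm = 0 ∧ (z 1).norm = 2) ∨ ((z 0).norm = 1 ∧ (z 1).norm = 1) := by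
    have := hnonneg (z 0)
    have := hnonneg (z 1)
    omega
  · obtain ⟨k, hk⟩ := exists_eq_one_add_I_mul_I_pow_of_norm_eq_two h0
    exact .inl ⟨k, by simp [hk, norm_eq_zero.mp h1]⟩
  · obtain ⟨k, hk⟩ := exists_eq_one_add_I_mul_I_pow_of_norm_eq_two h1
    exact .inr (.inl ⟨k, by simp [hk, norm_eq_zero.mp h0]⟩)
  · obtain ⟨k, hk⟩ := exists_eq_I_pow_of_norm_eq_one h0
    obtain ⟨l, hl⟩ := exists_eq_I_pow_of_norm_eq_one h1
    exact .inr (.inr ⟨k, l, by rw [hk, hl]⟩)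

end Gaussian

section G8

/-- The generator `r_4` of `G₈`. -/
def g8Gen : Matrix (Fin 2) (Fin 2) ℂ := !![1, 0; 0, Complex.I]

/-- The generator `r_4'` of `G₈`. -/
def g8Gen' : Matrix (Fin 2) (Fin 2) ℂ :=
  (1 / 2 : ℂ) • !![1 + Complex.I, -1 + Complex.I; -1 + Complex.I, 1 + Complex.I]

/-- The reflection group `G₈`. -/
def g8Group : Submonoid (Matrix (Fin 2) (Fin 2) ℂ) :=
  Submonoid.closure {g8Gen, g8Gen'}

lemma g8Gen_mem : g8Gen ∈ g8Group := Submonoid.subset_closure (.inl rfl)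

lemma g8Gen'_mem : g8Gen' ∈ g8Group := Submonoid.subset_closure (.inr rfl)

lemma g8Gen_pow (k : ℕ) : g8Gen ^ k = !![1, 0; 0, Complex.I ^ k] := by
  induction k with
  | zero => simp [one_fin_two]
  | succ k ih =>
    rw [pow_succ, ih, g8Gen]
    simp [pow_succ]

lemma g8Gen'_sq : g8Gen' ^ 2 = !![0, -1; -1, 0] := by
  ext i j
  fin_cases i <;> fin_cases j <;> simp [g8Gen', sq] <;> ring_nf <;> norm_num

lemma swap_mem_g8Group : !![0, 1; 1, 0] ∈ g8Group := by
  have swap_eq : !![0, 1; 1, 0] = g8Gen ^ 2 * g8Gen' ^ 2 * g8Gen ^ 2 := by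
    rw [g8Gen_pow, g8Gen'_sq]
    ext i j
    fin_cases i <;> fin_cases j <;> simp
  rw [swap_eq]
  exact mul_mem (mul_mem (pow_mem g8Gen_mem 2) (pow_mem g8Gen'_mem 2)) (pow_mem g8Gen_mem 2)

lemma diagonal_I_pow_mem_g8Group (k l : ℕ) :
    diagonal ![Complex.I ^ k, Complex.I ^ l] ∈ g8Group := by
  have diagonal_eq : diagonal ![Complex.I ^ k, Complex.I ^ l] =
      !![0, 1; 1, 0] * g8Gen ^ k * !![0, 1; 1, 0] * g8Gen ^ l := by
    rw [g8Gen_pow, g8Gen_pow]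
    ext i j
    fin_cases i <;> fin_cases j <;> simp
  rw [diagonal_eq]
  exact mul_mem (mul_mem (mul_mem swap_mem_g8Group (pow_mem g8Gen_mem k)) swap_mem_g8Group)
    (pow_mem g8Gen_mem l)

lemma star_g8Gen : star g8Gen = g8Gen ^ 3 := by
  rw [g8Gen_pow]
  ext i j
  fin_cases i <;> fin_cases j <;> simp [g8Gen]

lemma star_g8Gen' : star g8Gen' = g8Gen' ^ 3 := by
  rw [pow_succ, g8Gen'_sq]
  ext i j
  fin_cases i <;> fin_cases j <;> simp [g8Gen'] <;> ring

lemma star_mem_g8Group {w : Matrix (Fin 2) (Fin 2) ℂ} (hw : w ∈ g8Group) :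
    star w ∈ g8Group := by
  refine star_mem_closure ?_ hw
  rintro _ (rfl | rfl)
  · exact star_g8Gen ▸ pow_mem g8Gen_mem 3
  · exact star_g8Gen' ▸ pow_mem g8Gen'_mem 3

lemma g8Gen'_mulVec_g8BasePoint : g8Gen' *ᵥ g8BasePoint = ![Complex.I, -1] := by
  ext i
  fin_cases i <;> simp [g8Gen', g8BasePoint] <;> grind [Complex.I_mul_I]

lemma exists_g8Group_mulVec_g8BasePoint_eq {v : Fin 2 → ℂ} (hv : v ∈ gaussianSphere 2 2) :
    ∃ w ∈ g8Group, w *ᵥ g8BasePoint = v := by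
  obtain ⟨k, rfl⟩ | ⟨k, rfl⟩ | ⟨k, l, rfl⟩ := mem_gaussianSphere_two_two hv
  · refine ⟨_, diagonal_I_pow_mem_g8Group k 0, ?_⟩
    ext i
    fin_cases i <;> simp [g8BasePoint, mul_comm]
  · refine ⟨_, mul_mem (diagonal_I_pow_mem_g8Group 0 k) swap_mem_g8Group, ?_⟩
    ext i
    fin_cases i <;> simp [← mulVec_mulVec, g8BasePoint, mul_comm]
  · refine ⟨_, mul_mem (diagonal_I_pow_mem_g8Group (k + 3) (l + 2)) g8Gen'_mem, ?_⟩
    rw [← mulVec_mulVec, g8Gen'_mulVec_g8BasePoint]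
    ext i
    fin_cases i <;> simp [pow_add, mulVec_diagonal, mul_assoc]

lemma mem_g8Group_of_mulVec_g8BasePoint {M : Matrix (Fin 2) (Fin 2) ℂ}
    (hM : M ∈ unitaryGroup (Fin 2) ℂ ⊓ mulVecStabilizer (gaussianSphere 2 2))
    (hfix : M *ᵥ g8BasePoint = g8BasePoint) : M ∈ g8Group := by
  obtain ⟨hunit, hstab⟩ := hM
  have one_add_I_ne_zero : 1 + Complex.I ≠ 0 := fun h => by simpa using congrArg Complex.re h
  have h00 : M 0 0 = 1 := by
    simpa [g8BasePoint, one_add_I_ne_zero] using congrFun hfix 0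
  have h10 : M 1 0 = 0 := by
    simpa [g8BasePoint, one_add_I_ne_zero] using congrFun hfix 1
  have h01 : M 0 1 = 0 := by
    have columns_orthogonal := congrFun₂ (mem_unitaryGroup_iff'.mp hunit) 0 1
    simpa [Matrix.mul_apply, Fin.sum_univ_two, h00, h10] using columns_orthogonal
  have second_mem : ![0, 1 + Complex.I] ∈ gaussianSphere 2 2 :=
    ⟨![0, ⟨1, 1⟩], rfl, by ext i; fin_cases i <;> simp [GaussianInt.toComplex_def]⟩
  obtain ⟨k, h11⟩ : ∃ k : ℕ, M 1 1 = Complex.I ^ k := by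
    obtain ⟨z, hz, hzM⟩ := hstab second_mem
    have hz0 : z 0 = 0 := by
      rw [← GaussianInt.toComplex_eq_zero]
      simpa [h01] using (congrFun hzM 0).symm
    have hz1 : M 1 1 * (1 + Complex.I) = z 1 := by simpa using congrFun hzM 1
    obtain ⟨k, hk⟩ := exists_eq_one_add_I_mul_I_pow_of_norm_eq_two (z := z 1)
      (by simpa [Fin.sum_univ_two, hz0] using hz)
    exact ⟨k, mul_right_cancel₀ one_add_I_ne_zero (by rw [hz1, hk, mul_comm])⟩
  have M_eq : M = diagonal ![Complex.I ^ 0, Complex.I ^ k] := by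
    ext i j
    fin_cases i <;> fin_cases j <;> simp [h00, h01, h10, h11]
  exact M_eq ▸ diagonal_I_pow_mem_g8Group 0 k

end G8

section Subquotient

lemma g8Gen_mem_subquotient : g8Gen ∈ subquotient f4Group eigFrame := by
  refine ⟨_, mul_mem (f4Refl_mem 1) (f4Refl_mem 2), ?_⟩
  rw [f4Refl_eq, eigFrame, g8Gen]
  ext i j
  fin_cases i <;> fin_cases j <;> simp

lemma g8Gen'_mem_subquotient : g8Gen' ∈ subquotient f4Group eigFrame := by
  refine ⟨_, mul_mem (mul_mem f4Coxeter_mem (f4Refl_mem 2)) (f4Refl_mem 1), ?_⟩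
  rw [f4Coxeter_eq, f4Refl_eq, eigFrame, g8Gen']
  ext i j
  fin_cases i <;> fin_cases j <;> simp <;> ring_nf <;> simp <;> ring

lemma g8Group_le_subquotient : g8Group ≤ subquotient f4Group eigFrame := by
  rw [g8Group, Submonoid.closure_le]
  rintro _ (rfl | rfl)
  exacts [g8Gen_mem_subquotient, g8Gen'_mem_subquotient]

lemma subquotient_le_gaussianSphere_stabilizer {m : ℤ} (hm : Even m) :
    subquotient f4Group eigFrame ≤
      unitaryGroup (Fin 2) ℂ ⊓ mulVecStabilizer (gaussianSphere 2 m) :=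
  conjTranspose_eigFrame_image_intSphere m ▸
    subquotient_le_unitaryGroup_inf_mulVecStabilizer two_ne_zero
      conjTranspose_eigFrame_mul_eigFrame (f4Group_le_unitaryGroup_inf_mulVecStabilizer hm)

lemma gaussianSphere_stabilizer_le_g8Group :
    unitaryGroup (Fin 2) ℂ ⊓ mulVecStabilizer (gaussianSphere 2 2) ≤ g8Group := by
  intro M hM
  obtain ⟨w, hw, hwM⟩ := exists_g8Group_mulVec_g8BasePoint_eq (hM.2 g8BasePoint_mem)
  have g8Group_le := g8Group_le_subquotient.trans
    (subquotient_le_gaussianSphere_stabilizer even_two)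
  have hw_unit : w ∈ unitaryGroup (Fin 2) ℂ := (g8Group_le hw).1
  have hfix : (star w * M) *ᵥ g8BasePoint = g8BasePoint := by
    rw [← mulVec_mulVec, ← hwM, mulVec_mulVec, mem_unitaryGroup_iff'.mp hw_unit, one_mulVec]
  have hmem : star w * M ∈ g8Group :=
    mem_g8Group_of_mulVec_g8BasePoint (mul_mem (g8Group_le (star_mem_g8Group hw)) hM) hfix
  have hM_eq : M = w * (star w * M) := by
    rw [← mul_assoc, mem_unitaryGroup_iff.mp hw_unit, one_mul]
  exact hM_eq ▸ mul_mem hw hmem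

lemma g8Group_eq_subquotient : g8Group = subquotient f4Group eigFrame :=
  le_antisymm g8Group_le_subquotient
    ((subquotient_le_gaussianSphere_stabilizer even_two).trans
      gaussianSphere_stabilizer_le_g8Group)

end Subquotient

lemma exp_pi_mul_I_div_six_pow_three : Complex.exp (Real.pi * Complex.I / 6) ^ 3 = Complex.I := by
  calc Complex.exp (Real.pi * Complex.I / 6) ^ 3 = Complex.exp (Real.pi / 2 * Complex.I) := by
        rw [← Complex.exp_nat_mul]
        ring_nf
    _ = Complex.I := Complex.exp_pi_div_two_mul_I

/-- The `4`-reflection subquotient of `G₂₈ = F₄` is isomorphic to `G₈`: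
with `ζ = e^{πi/6}`, the Coxeter element `g` of `F₄`, and `E` the `ζ^3`-eigenspace of
`g^3` (a `2`-dimensional subspace), there is a `ℂ`-linear isomorphism `ψ : E ≅ ℂ^2`
conjugating `π_E(N_E)` onto `G₈`. -/
theorem statement_15 (ζ : ℂ) (hζ : ζ = Complex.exp (Real.pi * Complex.I / 6))
    (β : Fin 4 → (Fin 4 → ℂ))
    (hβ0 : β 0 = ![1, -1, 0, 0])
    (hβ1 : β 1 = ![0, 1, -1, 0])
    (hβ2 : β 2 = ![0, 0, (Real.sqrt 2 : ℂ), 0])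
    (hβ3 : β 3 = ![-(1 / (Real.sqrt 2 : ℂ)), -(1 / (Real.sqrt 2 : ℂ)),
      -(1 / (Real.sqrt 2 : ℂ)), -(1 / (Real.sqrt 2 : ℂ))])
    (G28 : Submonoid (Matrix (Fin 4) (Fin 4) ℂ))
    (hG28 : G28 = Submonoid.closure {M | ∃ i : Fin 4, M = reflMat (β i) (-1)})
    (g : Matrix (Fin 4) (Fin 4) ℂ)
    (hg : g = reflMat (β 0) (-1) * reflMat (β 1) (-1) * reflMat (β 2) (-1) *
      reflMat (β 3) (-1))
    (E : Submodule ℂ (Fin 4 → ℂ)) (hE : E = eigSpace (g ^ 3) (ζ ^ 3))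
    (r₄ r₄' : Matrix (Fin 2) (Fin 2) ℂ)
    (hr₄ : r₄ = !![1, 0; 0, Complex.I])
    (hr₄' : r₄' = (1 / 2 : ℂ) • !![1 + Complex.I, -1 + Complex.I;
      -1 + Complex.I, 1 + Complex.I])
    (G8 : Submonoid (Matrix (Fin 2) (Fin 2) ℂ))
    (hG8 : G8 = Submonoid.closure {r₄, r₄'}) :
    Module.finrank ℂ E = 2 ∧
    ∃ Φ : (Fin 2 → ℂ) →ₗ[ℂ] (Fin 4 → ℂ), Function.Injective Φ ∧
      LinearMap.range Φ = E ∧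
      (G8 : Set (Matrix (Fin 2) (Fin 2) ℂ)) =
        {M' | ∃ M ∈ G28, (∀ v ∈ E, M.mulVec v ∈ E) ∧
          ∀ t : Fin 2 → ℂ, M.mulVec (Φ t) = Φ (M'.mulVec t)} := by
  have hrefl := reflMat_eq_f4Refl hβ0 hβ1 hβ2 hβ3
  have hG28' : G28 = f4Group := by
    simp only [hG28, hrefl, f4Group, Set.range, eq_comm]
  have hG8' : G8 = subquotient G28 eigFrame := by
    rw [hG8, hr₄, hr₄', hG28', ← g8Group_eq_subquotient]
    rfl
  have hrange : LinearMap.range eigFrame.mulVecLin = E := by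
    rw [hE, hg, hζ, exp_pi_mul_I_div_six_pow_three, ← eigSpace_f4Coxeter_pow_three]
    simp only [hrefl, f4Coxeter]
  refine ⟨?_, eigFrame.mulVecLin, eigFrame_mulVecLin_injective, hrange, ?_⟩
  · rw [← hrange, LinearMap.finrank_range_of_inj eigFrame_mulVecLin_injective,
      Module.finrank_fin_fun]
  · ext M'
    rw [hG8', SetLike.mem_coe, mem_subquotient_iff, hrange]
    rfl

end
end Paper
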